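/- (Honest-verifier zero knowledge for the Schnorr protocol.) Let G be a finite group of prime order p, let g ∈ G with g ≠ 1, let r ∈ ZMod p, and set a = g^r. Then the following two PMFs on G × ZMod p × ZMod p are equal: the real transcript distribution, which draws s and β independently and uniformly from ZMod p and outputs (g^s, β, s + β·r); and the simulated transcript distribution, which draws β and γ independently and uniformly from ZMod p and outputs (g^γ·(a^β)⁻¹, β, γ). -/

import Mathlib

/-!
Fix the challenge `β`. Substituting `γ = s + β * r` into the simulated commitment
`g ^ γ * (a ^ β)⁻¹` gives back `g ^ s`, so the simulator run on the honest response outputs the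
honest transcript. For fixed `β` the translation `s ↦ s + β * r` is a bijection, so the honest
response is uniform, as is the simulator's `γ`.
-/

section UniformPMF

variable {α β γ : Type*} [Fintype α] [Nonempty α] [Fintype β] [Nonempty β]

theorem map_equiv_uniformOfFintype (e : α ≃ β) :
    (PMF.uniformOfFintype α).map e = PMF.uniformOfFintype β := by
  ext b
  rw [PMF.map_apply, tsum_eq_single (e.symm b)]
  · simp [Fintype.card_congr e]
  · exact fun a ha => if_neg fun h => ha (e.symm_apply_eq.mpr h).symm

theorem map_comp_equiv_uniformOfFintype (e : α ≃ β) (f : β → γ) :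
    (PMF.uniformOfFintype α).map (f ∘ e) = (PMF.uniformOfFintype β).map f := by
  rw [← PMF.map_comp, map_equiv_uniformOfFintype]

end UniformPMF

section ZModExponents

variable {M : Type*} [Monoid M] {n : ℕ} {g : M}

theorem pow_zmod_val_add [NeZero n] (hg : g ^ n = 1) (x y : ZMod n) :
    g ^ (x + y).val = g ^ x.val * g ^ y.val := by
  rw [ZMod.val_add, ← pow_eq_pow_mod _ hg, pow_add]

theorem pow_zmod_val_mul (hg : g ^ n = 1) (x y : ZMod n) :
    g ^ (x * y).val = (g ^ x.val) ^ y.val := by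
  rw [ZMod.val_mul, ← pow_eq_pow_mod _ hg, pow_mul]

end ZModExponents

section Schnorr

variable {G : Type*} [Group G] {n : ℕ} [NeZero n] {g : G}

theorem simulated_commitment_honest_response (hg : g ^ n = 1) (r s β : ZMod n) :
    g ^ (s + β * r).val * ((g ^ r.val) ^ β.val)⁻¹ = g ^ s.val := by
  rw [pow_zmod_val_add hg, mul_comm β r, pow_zmod_val_mul hg, mul_inv_cancel_right]

theorem map_honest_transcript_eq_map_simulated_transcript (hg : g ^ n = 1) (r β : ZMod n) :
    ((PMF.uniformOfFintype (ZMod n)).map fun s => (g ^ s.val, β, s + β * r)) =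
      (PMF.uniformOfFintype (ZMod n)).map fun γ =>
        (g ^ γ.val * ((g ^ r.val) ^ β.val)⁻¹, β, γ) := by
  conv_rhs => rw [← map_comp_equiv_uniformOfFintype (Equiv.addRight (β * r))]
  simp only [Function.comp_def, Equiv.coe_addRight, simulated_commitment_honest_response hg]

theorem schnorr_hvzk_general (hg : g ^ n = 1) (challenge : PMF (ZMod n))
    (r : ZMod n) (a : G) (ha : a = g ^ r.val) :
    ((PMF.uniformOfFintype (ZMod n)).bind fun s =>
        challenge.map fun β => (g ^ s.val, β, s + β * r)) =
      challenge.bind fun β =>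
        (PMF.uniformOfFintype (ZMod n)).map fun γ => (g ^ γ.val * (a ^ β.val)⁻¹, β, γ) := by
  subst ha
  calc
    _ = challenge.bind fun β =>
          (PMF.uniformOfFintype (ZMod n)).map fun s => (g ^ s.val, β, s + β * r) :=
      PMF.bind_comm _ _ _
    _ = _ := by simp only [map_honest_transcript_eq_map_simulated_transcript hg]

end Schnorr

/-- Honest-verifier zero knowledge for the Schnorr protocol: the real transcript
distribution (draw `s` and `β` independently and uniformly, output
`(g ^ s, β, s + β * r)`) is equal, as a PMF on `G × ZMod p × ZMod p`, to the
simulated transcript distribution (draw `β` and `γ` independently and uniformly,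
output `(g ^ γ * (a ^ β)⁻¹, β, γ)`), where `a = g ^ r`. -/
theorem schnorr_hvzk
    {G : Type} [Group G] [Fintype G] (p : ℕ) [Fact p.Prime]
    (hG : Fintype.card G = p) (g : G) (hg : g ≠ 1)
    (r : ZMod p) (a : G) (ha : a = g ^ r.val) :
    ((PMF.uniformOfFintype (ZMod p)).bind fun s =>
        (PMF.uniformOfFintype (ZMod p)).map fun β =>
          ((g ^ s.val, β, s + β * r) : G × ZMod p × ZMod p))
      =
    ((PMF.uniformOfFintype (ZMod p)).bind fun β =>
        (PMF.uniformOfFintype (ZMod p)).map fun γ =>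
          ((g ^ γ.val * (a ^ β.val)⁻¹, β, γ) : G × ZMod p × ZMod p)) := by
  exact schnorr_hvzk_general (hG ▸ pow_card_eq_one) _ r a ha
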